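/- Let (H, ‖·‖) be a separable Hilbert space and ξ a random variable with values in H defined on a probability space, with ‖ξ‖ ≤ M < ∞ almost surely. Let σ²(ξ) = E(‖ξ‖²), and let y₁,…,y_m be independent copies of the underlying random variable. Then for any 0 < δ < 1, with probability at least 1 - δ, ‖(1/m)∑_{i=1}^m ξ(y_i) - E(ξ)‖ ≤ (2M log(2/δ))/m + √(2σ²(ξ) log(2/δ)/m). -/

import Mathlib

open MeasureTheory

lemma hh_cosh_sqrt (p q r θ : ℝ) (h0 : 0 ≤ θ) (h1 : θ ≤ 1)
    (h : r ^ 2 = θ * p ^ 2 + (1 - θ) * q ^ 2) :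
    Real.cosh r ≤ θ * Real.cosh p + (1 - θ) * Real.cosh q := by
  refine hasSum_le (fun n => ?_) (Real.hasSum_cosh r)
    (((Real.hasSum_cosh p).mul_left θ).add ((Real.hasSum_cosh q).mul_left (1 - θ)))
  have := (convexOn_pow (𝕜 := ℝ) n).2 (x := p ^ 2) (Set.mem_Ici.2 (sq_nonneg p)) (y := q ^ 2)
    (Set.mem_Ici.2 (sq_nonneg q)) h0 (sub_nonneg.2 h1) (by ring)
  simp only [smul_eq_mul] at this
  rw [← h] at this
  simp only [pow_mul]
  rw [← mul_div_assoc, ← mul_div_assoc, ← add_div]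
  gcongr

lemma hh_end (a b : ℝ) (ha : 0 ≤ a) (hb : 0 ≤ b) :
    Real.cosh (a + b) ≤ Real.cosh a + Real.sinh a * b + Real.cosh a * (Real.exp b - 1 - b) ∧
    Real.cosh (a - b) ≤ Real.cosh a - Real.sinh a * b + Real.cosh a * (Real.exp b - 1 - b) := by
  rw [Real.cosh_add, Real.cosh_sub, ← Real.cosh_add_sinh b]
  have h1 : b ≤ Real.sinh b := Real.self_le_sinh_iff.2 hb
  have h2 : Real.sinh a ≤ Real.cosh a := (Real.sinh_lt_cosh a).le
  have h3 : 0 ≤ Real.sinh a := Real.sinh_nonneg_iff.2 ha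
  constructor
  · nlinarith [mul_nonneg (sub_nonneg.2 h1) (sub_nonneg.2 h2)]
  · nlinarith [mul_nonneg (sub_nonneg.2 h1) (add_nonneg h3 (h3.trans h2))]

lemma hh_point {H : Type*} [NormedAddCommGroup H] [InnerProductSpace ℝ H] (s x : H) :
    Real.cosh ‖s + x‖ ≤ Real.cosh ‖s‖ + Real.sinh ‖s‖ / ‖s‖ * inner ℝ s x
      + Real.cosh ‖s‖ * (Real.exp ‖x‖ - 1 - ‖x‖) := by
  obtain ⟨e1, e2⟩ := hh_end ‖s‖ ‖x‖ (norm_nonneg _) (norm_nonneg _)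
  have hc := abs_le.1 (abs_real_inner_le_norm s x)
  have hsq := norm_add_sq_real s x
  have hk : Real.sinh ‖s‖ / ‖s‖ * ‖s‖ = Real.sinh ‖s‖ := by
    rcases eq_or_ne ‖s‖ 0 with h | h
    · simp [h]
    · field_simp
  set a := ‖s‖
  set b := ‖x‖
  set c : ℝ := inner ℝ s x
  have hab : 0 ≤ a * b := mul_nonneg (norm_nonneg _) (norm_nonneg _)
  obtain ⟨θ, h0, h1, hθ⟩ : ∃ θ : ℝ, 0 ≤ θ ∧ θ ≤ 1 ∧ c = (2 * θ - 1) * (a * b) := by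
    rcases hab.eq_or_lt with h | h
    · exact ⟨1/2, by norm_num, by norm_num, by rw [← h] at hc ⊢; linarith⟩
    · refine ⟨(c / (a * b) + 1) / 2, ?_, ?_, by
        have h' := div_mul_cancel₀ c h.ne'
        linear_combination -h'⟩
      · have : -1 ≤ c / (a * b) := by rw [le_div_iff₀ h]; linarith
        linarith
      · have : c / (a * b) ≤ 1 := by rw [div_le_iff₀ h]; linarith
        linarith
  have := hh_cosh_sqrt (a + b) (a - b) ‖s + x‖ θ h0 h1 (by rw [hsq, hθ]; ring)
  have e3 := mul_le_mul_of_nonneg_left e1 h0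
  have e4 := mul_le_mul_of_nonneg_left e2 (sub_nonneg.2 h1)
  have : Real.sinh a / a * c = (2 * θ - 1) * (Real.sinh a * b) := by
    rw [hθ, ← hk]; ring_nf
    rw [hθ] at *
    rcases eq_or_ne a 0 with h | h
    · simp [h]
    · field_simp
  rw [this]
  linarith

lemma hh_phi (x B : ℝ) (h0 : 0 ≤ x) (hx : x ≤ B) (hB : B < 1) :
    Real.exp x - 1 - x ≤ x ^ 2 / (2 * (1 - B)) := by
  have h := Real.exp_bound' h0 (by linarith) (n := 3) (by norm_num)
  simp [Finset.sum_range_succ, Nat.factorial] at h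
  rw [le_div_iff₀ (by linarith)]
  have h2 : Real.exp x - 1 - x ≤ x ^ 2 / 2 + x ^ 3 * (2 / 9) := by linarith
  have h3 : (Real.exp x - 1 - x) * (2 * (1 - B)) ≤ (x ^ 2 / 2 + x ^ 3 * (2 / 9)) * (2 * (1 - x)) := by
    apply mul_le_mul h2 (by linarith) (by linarith) (by positivity)
  have : 0 ≤ x ^ 3 := by positivity
  have : 0 ≤ x ^ 4 := by positivity
  nlinarith

section
variable {Y : Type*} [MeasurableSpace Y] (ρ : Measure Y) [IsProbabilityMeasure ρ]
    {H : Type*} [NormedAddCommGroup H] [InnerProductSpace ℝ H] [CompleteSpace H]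
    [SecondCountableTopology H] [MeasurableSpace H] [BorelSpace H]

lemma hh_step (Z : Y → H) (hZ : Measurable Z) (B V : ℝ) (hB : B < 1)
    (hb : ∀ᵐ y ∂ρ, ‖Z y‖ ≤ B) (h0 : ∫ y, Z y ∂ρ = 0) (hV : ∫ y, ‖Z y‖ ^ 2 ∂ρ ≤ V) (s : H) :
    ∫⁻ y, ENNReal.ofReal (Real.cosh ‖s + Z y‖) ∂ρ ≤
      ENNReal.ofReal (Real.cosh ‖s‖ * (1 + V / (2 * (1 - B)))) := by
  have hi : Integrable Z ρ := Integrable.of_bound hZ.aestronglyMeasurable B hb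
  have hi2 : Integrable (fun y => ‖Z y‖ ^ 2) ρ := by
    refine Integrable.of_bound (hZ.norm.pow_const 2).aestronglyMeasurable (B ^ 2) ?_
    filter_upwards [hb] with y hy
    rw [Real.norm_of_nonneg (by positivity)]
    gcongr
  have hinn : Integrable (fun y => inner ℝ s (Z y)) ρ := hi.const_inner s
  have hpt : ∀ᵐ y ∂ρ, Real.cosh ‖s + Z y‖ ≤ Real.cosh ‖s‖ + Real.sinh ‖s‖ / ‖s‖ * inner ℝ s (Z y)
      + Real.cosh ‖s‖ / (2 * (1 - B)) * ‖Z y‖ ^ 2 := by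
    filter_upwards [hb] with y hy
    refine (hh_point s (Z y)).trans ?_
    have := mul_le_mul_of_nonneg_left (hh_phi _ B (norm_nonneg _) hy hB) (Real.cosh_pos ‖s‖).le
    have e : Real.cosh ‖s‖ * (‖Z y‖ ^ 2 / (2 * (1 - B))) =
        Real.cosh ‖s‖ / (2 * (1 - B)) * ‖Z y‖ ^ 2 := by ring
    linarith
  have hint : Integrable (fun y => Real.cosh ‖s‖ + Real.sinh ‖s‖ / ‖s‖ * inner ℝ s (Z y)
      + Real.cosh ‖s‖ / (2 * (1 - B)) * ‖Z y‖ ^ 2) ρ :=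
    ((integrable_const _).add (hinn.const_mul _)).add (hi2.const_mul _)
  calc _ ≤ ∫⁻ y, ENNReal.ofReal (Real.cosh ‖s‖ + Real.sinh ‖s‖ / ‖s‖ * inner ℝ s (Z y)
      + Real.cosh ‖s‖ / (2 * (1 - B)) * ‖Z y‖ ^ 2) ∂ρ := by
        apply lintegral_mono_ae
        filter_upwards [hpt] with y hy
        exact ENNReal.ofReal_le_ofReal hy
    _ = ENNReal.ofReal (∫ y, (Real.cosh ‖s‖ + Real.sinh ‖s‖ / ‖s‖ * inner ℝ s (Z y)
      + Real.cosh ‖s‖ / (2 * (1 - B)) * ‖Z y‖ ^ 2) ∂ρ) := by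
        rw [ofReal_integral_eq_lintegral_ofReal hint]
        filter_upwards [hpt] with y hy
        exact (Real.cosh_pos _).le.trans hy
    _ ≤ _ := by
        apply ENNReal.ofReal_le_ofReal
        have hA : Integrable (fun y => Real.cosh ‖s‖ + Real.sinh ‖s‖ / ‖s‖ * inner ℝ s (Z y)) ρ :=
          (integrable_const _).add (hinn.const_mul _)
        rw [integral_add hA (hi2.const_mul _),
          integral_add (integrable_const _) (hinn.const_mul _), integral_const_mul,
          integral_const_mul, integral_inner hi, h0]
        simp only [integral_const, probReal_univ, one_smul, inner_zero_right, mul_zero, add_zero]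
        have h1 : 0 ≤ Real.cosh ‖s‖ / (2 * (1 - B)) :=
          div_nonneg (Real.cosh_pos _).le (by linarith)
        have := mul_le_mul_of_nonneg_left hV h1
        calc _ ≤ Real.cosh ‖s‖ + Real.cosh ‖s‖ / (2 * (1 - B)) * V := by linarith
          _ = _ := by ring

lemma hh_ind (Z : Y → H) (hZ : Measurable Z) (B V : ℝ) (hB : B < 1)
    (hb : ∀ᵐ y ∂ρ, ‖Z y‖ ≤ B) (h0 : ∫ y, Z y ∂ρ = 0) (hV : ∫ y, ‖Z y‖ ^ 2 ∂ρ ≤ V) (n : ℕ) :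
    ∀ s : H, ∫⁻ y, ENNReal.ofReal (Real.cosh ‖s + ∑ i, Z (y i)‖) ∂(Measure.pi fun _ : Fin n => ρ) ≤
      ENNReal.ofReal (Real.cosh ‖s‖ * (1 + V / (2 * (1 - B))) ^ n) := by
  have hK : 0 ≤ 1 + V / (2 * (1 - B)) := by
    have : 0 ≤ V := le_trans (integral_nonneg fun y => by positivity) hV
    have : 0 ≤ V / (2 * (1 - B)) := div_nonneg this (by linarith)
    linarith
  induction n with
  | zero => intro s; simp
  | succ n ih =>
    intro s
    set K := 1 + V / (2 * (1 - B)) with hKdef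
    have hmp := (measurePreserving_piFinSuccAbove (fun _ : Fin (n + 1) => ρ) 0)
    have hG : Measurable (fun p : Y × (Fin n → Y) =>
        ENNReal.ofReal (Real.cosh ‖(s + Z p.1) + ∑ i, Z (p.2 i)‖)) := by
      refine ENNReal.measurable_ofReal.comp (Real.continuous_cosh.measurable.comp
        (Measurable.norm ?_))
      fun_prop
    calc _ = ∫⁻ p, ENNReal.ofReal (Real.cosh ‖(s + Z p.1) + ∑ i, Z (p.2 i)‖)
          ∂(ρ.prod (Measure.pi fun _ : Fin n => ρ)) := by
          rw [← hmp.lintegral_comp hG]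
          refine lintegral_congr fun y => ?_
          simp [Fin.sum_univ_succ, add_assoc, MeasurableEquiv.piFinSuccAbove, Fin.tail]
      _ = ∫⁻ y, ∫⁻ z, ENNReal.ofReal (Real.cosh ‖(s + Z y) + ∑ i, Z (z i)‖)
          ∂(Measure.pi fun _ : Fin n => ρ) ∂ρ := lintegral_prod _ hG.aemeasurable
      _ ≤ ∫⁻ y, ENNReal.ofReal (Real.cosh ‖s + Z y‖) * ENNReal.ofReal (K ^ n) ∂ρ := by
          refine lintegral_mono fun y => ?_
          rw [← ENNReal.ofReal_mul (Real.cosh_pos _).le]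
          exact ih _
      _ = (∫⁻ y, ENNReal.ofReal (Real.cosh ‖s + Z y‖) ∂ρ) * ENNReal.ofReal (K ^ n) := by
          rw [lintegral_mul_const']
          exact ENNReal.ofReal_ne_top
      _ ≤ ENNReal.ofReal (Real.cosh ‖s‖ * K) * ENNReal.ofReal (K ^ n) := by
          gcongr
          exact hh_step ρ Z hZ B V hB hb h0 hV s
      _ = _ := by
          rw [← ENNReal.ofReal_mul (mul_nonneg (Real.cosh_pos _).le hK)]
          congr 1; ring

lemma hh_tail (Z : Y → H) (hZ : Measurable Z) (B V : ℝ) (hB : B < 1)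
    (hb : ∀ᵐ y ∂ρ, ‖Z y‖ ≤ B) (h0 : ∫ y, Z y ∂ρ = 0) (hV : ∫ y, ‖Z y‖ ^ 2 ∂ρ ≤ V) (n : ℕ)
    (R : ℝ) (hR : 0 ≤ R) :
    (Measure.pi fun _ : Fin n => ρ) {y | R ≤ ‖∑ i, Z (y i)‖} ≤
      ENNReal.ofReal (2 * Real.exp (n * (V / (2 * (1 - B))) - R)) := by
  have hV0 : 0 ≤ V / (2 * (1 - B)) :=
    div_nonneg (le_trans (integral_nonneg fun y => by positivity) hV) (by linarith)
  have h1 := hh_ind ρ Z hZ B V hB hb h0 hV n 0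
  simp only [zero_add, norm_zero, Real.cosh_zero, one_mul] at h1
  have hG : Measurable (fun y : Fin n → Y => ENNReal.ofReal (Real.cosh ‖∑ i, Z (y i)‖)) := by
    refine ENNReal.measurable_ofReal.comp (Real.continuous_cosh.measurable.comp
        (Measurable.norm ?_))
    fun_prop
  have h2 := mul_meas_ge_le_lintegral (μ := Measure.pi fun _ : Fin n => ρ) hG
    (ENNReal.ofReal (Real.exp R / 2))
  have hsub : {y : Fin n → Y | R ≤ ‖∑ i, Z (y i)‖} ⊆
      {y | ENNReal.ofReal (Real.exp R / 2) ≤ ENNReal.ofReal (Real.cosh ‖∑ i, Z (y i)‖)} := by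
    intro y hy
    simp only [Set.mem_setOf_eq] at hy ⊢
    apply ENNReal.ofReal_le_ofReal
    rw [Real.cosh_eq]
    have := Real.exp_le_exp.2 hy
    have := Real.exp_pos (-‖∑ i, Z (y i)‖)
    linarith
  have h3 : ENNReal.ofReal (Real.exp R / 2) *
      (Measure.pi fun _ : Fin n => ρ) {y | R ≤ ‖∑ i, Z (y i)‖} ≤
      ENNReal.ofReal ((1 + V / (2 * (1 - B))) ^ n) :=
    (mul_le_mul_right (measure_mono hsub) _).trans (h2.trans h1)
  have h4 : (1 + V / (2 * (1 - B))) ^ n ≤ Real.exp (n * (V / (2 * (1 - B)))) := by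
    rw [Real.exp_nat_mul]
    gcongr
    rw [add_comm]; exact Real.add_one_le_exp _
  have hp : 0 < Real.exp R / 2 := by positivity
  have h5 : ENNReal.ofReal (2 * Real.exp (n * (V / (2 * (1 - B))) - R)) =
      ENNReal.ofReal (Real.exp (n * (V / (2 * (1 - B))))) / ENNReal.ofReal (Real.exp R / 2) := by
    rw [← ENNReal.ofReal_div_of_pos hp, Real.exp_sub]
    congr 1; field_simp
  rw [h5, ENNReal.le_div_iff_mul_le (Or.inl (by simpa using hp)) (Or.inl ENNReal.ofReal_ne_top),
    mul_comm]
  exact h3.trans (ENNReal.ofReal_le_ofReal h4)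

end

/-- Probability inequality for Hilbert-space valued random variables
(Lemma from Smale–Zhou): with confidence `1 - δ`, the empirical mean of `m`
i.i.d. samples of a bounded `H`-valued random variable `ξ` deviates from its
expectation by at most `2M log(2/δ)/m + √(2σ²(ξ) log(2/δ)/m)`. -/
theorem hilbert_hoeffding
    {Y : Type*} [MeasurableSpace Y] (ρ : Measure Y) [IsProbabilityMeasure ρ]
    {H : Type*} [NormedAddCommGroup H] [InnerProductSpace ℝ H] [CompleteSpace H]
    [SecondCountableTopology H] [MeasurableSpace H] [BorelSpace H]
    (ξ : Y → H) (hmeas : Measurable ξ)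
    (M : ℝ) (hM : ∀ᵐ y ∂ρ, ‖ξ y‖ ≤ M)
    (m : ℕ) (hm : 1 ≤ m) (δ : ℝ) (hδ0 : 0 < δ) (hδ1 : δ < 1) :
    1 - ENNReal.ofReal δ ≤
      (Measure.pi fun _ : Fin m => ρ)
        {y : Fin m → Y |
          ‖(1 / (m : ℝ)) • (∑ i : Fin m, ξ (y i)) - ∫ x, ξ x ∂ρ‖ ≤
            2 * M * Real.log (2 / δ) / m +
              Real.sqrt (2 * (∫ x, ‖ξ x‖ ^ 2 ∂ρ) * Real.log (2 / δ) / m)} := by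
  have hm0 : (0 : ℝ) < m := by exact_mod_cast hm
  have hM0 : 0 ≤ M := by
    obtain ⟨y, hy⟩ := hM.exists
    exact (norm_nonneg _).trans hy
  have hi : Integrable ξ ρ := Integrable.of_bound hmeas.aestronglyMeasurable M hM
  have hi2 : Integrable (fun y => ‖ξ y‖ ^ 2) ρ := by
    refine Integrable.of_bound (hmeas.norm.pow_const 2).aestronglyMeasurable (M ^ 2) ?_
    filter_upwards [hM] with y hy
    rw [Real.norm_of_nonneg (by positivity)]
    gcongr
  set t := Real.log (2 / δ) with ht
  have ht0 : 0 < t := Real.log_pos (by rw [lt_div_iff₀ hδ0]; linarith)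
  have het : 2 * Real.exp (-t) = δ := by
    rw [ht, Real.exp_neg, Real.exp_log (by positivity)]; field_simp
  set v := ∫ x, ‖ξ x‖ ^ 2 ∂ρ with hv
  have hv0 : 0 ≤ v := integral_nonneg fun y => by positivity
  set μ := ∫ x, ξ x ∂ρ with hμ
  set T := 2 * M * t / m + Real.sqrt (2 * v * t / m) with hT
  have hT0 : 0 ≤ T := by positivity
  set P := Measure.pi fun _ : Fin m => ρ with hP
  set G := {y : Fin m → Y | ‖(1 / (m : ℝ)) • (∑ i : Fin m, ξ (y i)) - μ‖ ≤ T} with hGdef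
  suffices hbad : P Gᶜ ≤ ENNReal.ofReal δ by
    rw [tsub_le_iff_right]
    calc (1 : ENNReal) = P Set.univ := by simp [hP]
      _ = P (G ∪ Gᶜ) := by rw [Set.union_compl_self]
      _ ≤ P G + P Gᶜ := measure_union_le _ _
      _ ≤ _ := by gcongr
  rcases hv0.eq_or_lt with hz | hvpos
  · have hae : ∀ᵐ y ∂ρ, ξ y = 0 := by
      have := (integral_eq_zero_iff_of_nonneg (fun y => by positivity) hi2).1 hz.symm
      filter_upwards [this] with y hy
      simpa using hy
    have hμ0 : μ = 0 := by
      rw [hμ, integral_congr_ae (g := fun _ => (0 : H)) hae]; simp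
    have hall : ∀ᵐ y ∂P, ∀ i, ξ (y i) = 0 := by
      rw [ae_all_iff]
      intro i
      exact (measurePreserving_eval (fun _ : Fin m => ρ) i).quasiMeasurePreserving.ae hae
    have : P Gᶜ = 0 := by
      rw [← mem_ae_iff]
      filter_upwards [hall] with y hy
      simp [hGdef, hy, hμ0, hT0]
    rw [this]; exact zero_le
  · set u := Real.sqrt (2 * t / (m * v)) with hu
    have hu0 : 0 < u := Real.sqrt_pos.2 (by positivity)
    have husq : u ^ 2 = 2 * t / (m * v) := Real.sq_sqrt (by positivity)
    set l := u / (1 + 2 * M * u) with hl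
    have hl0 : 0 < l := by positivity
    have hsT : Real.sqrt (2 * v * t / m) = v * u := by
      rw [show 2 * v * t / m = (v * u) ^ 2 by rw [mul_pow, husq]; field_simp]
      exact Real.sqrt_sq (by positivity)
    have hB : l * (2 * M) < 1 := by
      rw [hl, div_mul_eq_mul_div, div_lt_one (by positivity)]; linarith
    have hμM : ‖μ‖ ≤ M := by
      have := norm_integral_le_of_norm_le_const hM
      simpa using this
    have key := hh_tail ρ (fun y => l • (ξ y - μ)) ((hmeas.sub_const μ).const_smul l) (l * (2 * M))
      (l ^ 2 * v) hB (by
        filter_upwards [hM] with y hy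
        rw [norm_smul, Real.norm_of_nonneg hl0.le]
        gcongr
        linarith [norm_sub_le (ξ y) μ]) (by
        rw [integral_smul, integral_sub hi (integrable_const _)]
        simp [hμ]) (by
        simp only [norm_smul, mul_pow, Real.norm_of_nonneg hl0.le]
        rw [integral_const_mul]
        gcongr
        have e : ∀ y, ‖ξ y - μ‖ ^ 2 = ‖ξ y‖ ^ 2 - 2 * inner ℝ μ (ξ y) + ‖μ‖ ^ 2 := by
          intro y; rw [norm_sub_sq_real, real_inner_comm]
        have hin : Integrable (fun y => inner ℝ μ (ξ y)) ρ := hi.const_inner μ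
        simp only [e]
        have hA : Integrable (fun y => ‖ξ y‖ ^ 2 - 2 * inner ℝ μ (ξ y)) ρ :=
          hi2.sub (hin.const_mul _)
        rw [integral_add hA (integrable_const _),
          integral_sub hi2 (hin.const_mul _), integral_const_mul, integral_inner hi, ← hμ,
          real_inner_self_eq_norm_sq]
        simp only [integral_const, probReal_univ, one_smul]
        nlinarith [sq_nonneg ‖μ‖]) m (l * (m * T)) (by positivity)
    refine (measure_mono ?_).trans (key.trans (ENNReal.ofReal_le_ofReal ?_))
    · intro y hy
      simp only [hGdef, Set.mem_compl_iff, Set.mem_setOf_eq, not_le] at hy ⊢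
      have e : ∑ i, l • (ξ (y i) - μ) = (l * m) • ((1 / (m : ℝ)) • (∑ i : Fin m, ξ (y i)) - μ) := by
        rw [← Finset.smul_sum, Finset.sum_sub_distrib, mul_smul, smul_sub (m : ℝ), smul_smul,
          mul_one_div_cancel hm0.ne', one_smul]
        simp [Nat.cast_smul_eq_nsmul]
      rw [e, norm_smul, Real.norm_of_nonneg (by positivity), ← mul_assoc]
      gcongr
    · rw [← het]
      have h1B : 1 - l * (2 * M) = 1 / (1 + 2 * M * u) := by
        rw [hl]; field_simp; ring
      have e : (m : ℝ) * (l ^ 2 * v / (2 * (1 - l * (2 * M)))) - l * (m * T) = -t := by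
        have ht' : t = u ^ 2 * (m * v) / 2 := by rw [husq]; field_simp
        rw [h1B, hT, hsT, ht', hl]
        field_simp
        ring
      rw [e]
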